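/- Let G be an X-generated group. Then ξ_G = θ_G^♯, and consequently M_{sF}(G,X) is presented, as an X-generated inverse monoid, by the relations (i) w² = w for all words w ∈ X̄* such that w = 1 holds in G, and (ii) u = v⁻¹ for all words u,v ∈ X̄* such that (u,v) ∈ θ_G. -/

import Mathlib

/-!
The proof compares generating sets of congruences on words, since `presCon r` is contained in
`presCon r'` as soon as every pair of `r` is identified by `presCon r'` (`presCon_le_of_rel`).

*Coterminal simple paths versus `θ_G`.*  In a group, a word labels a simple path iff none of its
non-empty factors evaluates to `1`.  If `uv` labels a simple cycle, no such factor of `u` or `v⁻¹`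
is closed, so both label simple paths (`spRel_of_thetaRel`).  Conversely, let `p` and `q` label
coterminal simple paths.  A common first letter is cancelled.  If the first letters differ, follow
`q` up to the first vertex after `1` lying on `p`; this gives `p = p₁p₂` and `q = q₁q₂`, where
`p₁q₁⁻¹` labels a simple cycle and is cyclically reduced.  Hence `(p₁, q₁⁻¹) ∈ θ_G`, and
`p₂`, `q₂` are shorter coterminal simple paths, so induction applies (`con_of_coterminal`).

*The Margolis-Meakin relations versus `w² = w`.*  If `w = 1` in `G`, then `ww` spans the same
graph as `w`.  Conversely, consider an inverse monoid in which every word equal to `1` in `G` is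
idempotent.  There `uu⁻¹` lies below `ww⁻¹` whenever `Γ_w ⊆ Γ_u` (`le_of_Gamma_subset`, by
induction along `w`), so `Γ_u = Γ_v` forces `uu⁻¹ = vv⁻¹`.  If also `[u] = [v]` in `G`, then
`v⁻¹u` is idempotent and `u = v` follows (`mkW_eq_of_mmRel`).
-/


/-! Common framework: words over a doubled alphabet, inverse monoids,
presentations of inverse monoids as quotients of the free monoid on letters,
the minimum group congruence, F-inverse and strongly F-inverse properties,
and the Margolis-Meakin / M_sF machinery. -/

namespace SFI

/-- A letter of the doubled alphabet X̄ = X ∪ X⁻¹: a generator together with a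
polarity (`true` = the generator itself, `false` = its formal inverse). -/
abbrev Letter (X : Type*) := X × Bool

/-- Words over the doubled alphabet X̄, i.e. elements of the free monoid X̄*. -/
abbrev Word (X : Type*) := FreeMonoid (Letter X)

variable {X : Type*}

/-- The formal inverse of a letter. -/
def invL (a : Letter X) : Letter X := (a.1, !a.2)

theorem invL_invL (a : Letter X) : invL (invL a) = a := by
  cases a; simp [invL]

/-- Formal inversion of a word: reverse the word and invert each letter. -/
def wordInv (w : Word X) : Word X :=
  FreeMonoid.ofList (((FreeMonoid.toList w).reverse).map invL)

theorem wordInv_mul (u v : Word X) : wordInv (u * v) = wordInv v * wordInv u := by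
  simp only [wordInv, FreeMonoid.toList_mul, List.reverse_append, List.map_append,
    FreeMonoid.ofList_append]

theorem wordInv_wordInv (w : Word X) : wordInv (wordInv w) = w := by
  simp only [wordInv, FreeMonoid.toList_ofList, List.map_reverse, List.reverse_reverse,
    List.map_map]
  have : (invL ∘ invL : Letter X → Letter X) = id := funext invL_invL
  rw [this, List.map_id, FreeMonoid.ofList_toList]

/-- Evaluation of a letter in a monoid-with-inversion, along a map `ι` of generators. -/
def evalLetter {M : Type*} [Monoid M] [Inv M] (ι : X → M) (a : Letter X) : M :=
  if a.2 then ι a.1 else (ι a.1)⁻¹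

/-- Evaluation of a word in a monoid-with-inversion, along a map `ι` of generators:
`evalWord ι w` is the element `[w]` represented by the word `w`. -/
def evalWord {M : Type*} [Monoid M] [Inv M] (ι : X → M) (w : Word X) : M :=
  ((FreeMonoid.toList w).map (evalLetter ι)).prod

/-- `M` is `X`-generated via `ι : X → M` if every element of `M` is represented by
some word over the doubled alphabet X̄. -/
def XGen {M : Type*} [Monoid M] [Inv M] (ι : X → M) : Prop :=
  Function.Surjective (evalWord ι)

/-- Inverse monoids, as a variety: a monoid with an involutive anti-automorphism `⁻¹`
such that `a a⁻¹ a = a` and idempotents (elements of the form `a a⁻¹`) commute.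
This is equivalent to every element having a unique von Neumann inverse. -/
class InverseMonoid (M : Type*) extends Monoid M, Inv M where
  mul_inv_rev : ∀ a b : M, (a * b)⁻¹ = b⁻¹ * a⁻¹
  inv_inv : ∀ a : M, a⁻¹⁻¹ = a
  mul_inv_mul : ∀ a : M, a * a⁻¹ * a = a
  idem_mul_comm : ∀ a b : M, a * a⁻¹ * (b * b⁻¹) = b * b⁻¹ * (a * a⁻¹)

/-- The natural partial order of an inverse monoid: `a ≤ b` iff `a = a a⁻¹ b`. -/
def natLe {M : Type*} [Monoid M] [Inv M] (a b : M) : Prop := a = a * a⁻¹ * b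

/-- A congruence has group quotient iff every element of the quotient is (two-sided)
invertible. -/
def IsGroupCon {M : Type*} [Monoid M] (c : Con M) : Prop := ∀ x : c.Quotient, IsUnit x

/-- The minimum group congruence σ of a monoid: the infimum of all congruences whose
quotient is a group.  For an inverse monoid this is the least group congruence, and
the quotient is the maximum group image. -/
def sigmaCon (M : Type*) [Monoid M] : Con M := sInf {c : Con M | IsGroupCon c}

/-- An inverse monoid is F-inverse if every σ-class has a maximum element in the
natural partial order. -/
def FInverse (M : Type*) [InverseMonoid M] : Prop :=
  ∀ a : M, ∃ m : M, sigmaCon M m a ∧ ∀ b : M, sigmaCon M b a → natLe b m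

/-- The word obtained from the prefix of length `k` of `w`. -/
def wordPrefix (w : Word X) (k : ℕ) : Word X :=
  FreeMonoid.ofList ((FreeMonoid.toList w).take k)

/-- `w` labels a simple path starting at `1` in the Cayley graph of the maximum group
image `S/σ` of the inverse monoid `S` (w.r.t. the generating map `ι`): the values of
distinct prefixes of `w` lie in distinct σ-classes, i.e. the vertices visited by the
path are pairwise distinct. -/
def IsSimplePathWordS {S : Type*} [InverseMonoid S] (ι : X → S) (w : Word X) : Prop :=
  ∀ j k : ℕ, j ≤ (FreeMonoid.toList w).length → k ≤ (FreeMonoid.toList w).length →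
    sigmaCon S (evalWord ι (wordPrefix w j)) (evalWord ι (wordPrefix w k)) → j = k

/-- An X-generated inverse monoid `S` (via `ι`) is strongly F-inverse: it is F-inverse,
and the canonical morphism from the Margolis-Meakin expansion `M(S/σ, X)` to `S` sends
all maximal elements of each σ-class of `M(S/σ,X)` (namely, the graphs spanned by simple
paths from 1 to a fixed vertex) to the single maximum element of the corresponding
σ-class of `S`.  Concretely: any two words labelling simple paths from 1 to the same
vertex of the Cayley graph of S/σ represent the same element of `S`, and this element
is the top of its σ-class. -/
def StronglyFInverse {S : Type*} [InverseMonoid S] (ι : X → S) : Prop :=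
  XGen ι ∧ FInverse S ∧
    ∀ u v : Word X, IsSimplePathWordS ι u → IsSimplePathWordS ι v →
      sigmaCon S (evalWord ι u) (evalWord ι v) →
      evalWord ι u = evalWord ι v ∧
        ∀ t : Word X, sigmaCon S (evalWord ι t) (evalWord ι u) →
          natLe (evalWord ι t) (evalWord ι u)

/-! ### Presentations of inverse monoids -/

/-- The generating pairs of the Wagner congruence on X̄*: `(w w⁻¹ w, w)` and
`(u u⁻¹ v v⁻¹, v v⁻¹ u u⁻¹)`. -/
def wagnerRel : Word X → Word X → Prop := fun a b =>
  (∃ w : Word X, a = w * wordInv w * w ∧ b = w) ∨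
  (∃ u v : Word X, a = u * wordInv u * (v * wordInv v) ∧ b = v * wordInv v * (u * wordInv u))

/-- The congruence on X̄* generated by the Wagner relations together with the extra
defining relations `r`; the corresponding quotient is the inverse monoid
`Inv⟨X ∣ r⟩`.  (The relation set is closed under formal inversion; this does not
change the congruence, since any monoid congruence on an inverse monoid automatically
respects inversion, but it makes the inversion on the quotient directly definable.) -/
def presCon (r : Word X → Word X → Prop) : Con (Word X) :=
  conGen (fun u v => (wagnerRel u v ∨ r u v) ∨
    (wagnerRel (wordInv u) (wordInv v) ∨ r (wordInv u) (wordInv v)))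

/-- The inverse monoid presented by the defining relations `r` (together with the
Wagner relations), i.e. `Inv⟨X ∣ r⟩`, a quotient of the free inverse monoid FIM(X). -/
def InvPres (r : Word X → Word X → Prop) : Type _ := (presCon r).Quotient

instance (r : Word X → Word X → Prop) : Monoid (InvPres r) :=
  inferInstanceAs (Monoid (presCon r).Quotient)

theorem presCon_inv {r : Word X → Word X → Prop} {u v : Word X} (h : presCon r u v) :
    presCon r (wordInv u) (wordInv v) := by
  show ConGen.Rel _ (wordInv u) (wordInv v)
  have h' : ConGen.Rel (fun u v => (wagnerRel u v ∨ r u v) ∨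
      (wagnerRel (wordInv u) (wordInv v) ∨ r (wordInv u) (wordInv v))) u v := h
  clear h
  induction h' with
  | of a b hab =>
    apply ConGen.Rel.of
    rcases hab with hab | hab
    · exact Or.inr (by rwa [wordInv_wordInv, wordInv_wordInv])
    · exact Or.inl hab
  | refl a => exact ConGen.Rel.refl _
  | symm _ ih => exact ConGen.Rel.symm ih
  | trans _ _ ih₁ ih₂ => exact ConGen.Rel.trans ih₁ ih₂
  | mul _ _ ih₁ ih₂ => rw [wordInv_mul, wordInv_mul]; exact ConGen.Rel.mul ih₂ ih₁

instance (r : Word X → Word X → Prop) : Inv (InvPres r) :=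
  ⟨Quotient.map' wordInv (fun _ _ h => presCon_inv h)⟩

instance (r : Word X → Word X → Prop) : InverseMonoid (InvPres r) where
  mul_inv_rev a b := by
    refine Quotient.inductionOn₂' a b (fun u v => ?_)
    exact congrArg Quotient.mk'' (wordInv_mul u v)
  inv_inv a := by
    refine Quotient.inductionOn' a (fun u => ?_)
    exact congrArg Quotient.mk'' (wordInv_wordInv u)
  mul_inv_mul a := by
    refine Quotient.inductionOn' a (fun u => ?_)
    exact Quotient.sound' (ConGen.Rel.of _ _ (Or.inl (Or.inl (Or.inl ⟨u, rfl, rfl⟩))))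
  idem_mul_comm a b := by
    refine Quotient.inductionOn₂' a b (fun u v => ?_)
    exact Quotient.sound' (ConGen.Rel.of _ _ (Or.inl (Or.inl (Or.inr ⟨u, v, rfl, rfl⟩))))

/-- The element of `Inv⟨X ∣ r⟩` represented by the word `w`. -/
def mkW (r : Word X → Word X → Prop) (w : Word X) : InvPres r := Quotient.mk'' w

/-- The canonical generating map `X → Inv⟨X ∣ r⟩`. -/
def genMap (r : Word X → Word X → Prop) : X → InvPres r :=
  fun x => mkW r (FreeMonoid.of (x, true))

/-- The defining relation of a special inverse monoid `Inv⟨X ∣ w = 1⟩`. -/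
def specialRel (w : Word X) : Word X → Word X → Prop := fun a b => a = w ∧ b = 1

/-- The defining relations of a special inverse monoid `Inv⟨X ∣ wᵢ = 1 (i ∈ I)⟩`. -/
def familyRel {I : Type*} (w : I → Word X) : Word X → Word X → Prop :=
  fun a b => ∃ i, a = w i ∧ b = 1

/-- The defining relations of an inverse monoid `Inv⟨X ∣ uᵢ = vᵢ (i ∈ I)⟩`. -/
def pairsRel {I : Type*} (p : I → Word X × Word X) : Word X → Word X → Prop :=
  fun a b => ∃ i, a = (p i).1 ∧ b = (p i).2

/-! ### Cayley graphs -/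

section Graph

variable {G : Type*} [Monoid G] [Inv G]

/-- The set of (inverse-closed pairs of) edges of the Cayley graph traversed by the
path starting at `g` and labelled by the list of letters `l`; an edge from `h`
labelled by the letter `a` is recorded as the pair `(h, a)`, together with its
inverse edge `(h·[a], a⁻¹)`. -/
def pathEdges (ιG : X → G) : G → List (Letter X) → Set (G × Letter X)
  | _, [] => ∅
  | g, a :: l =>
      insert (g, a) (insert (g * evalLetter ιG a, invL a)
        (pathEdges ιG (g * evalLetter ιG a) l))

/-- `Γ_w`: the subgraph (set of edges) of the Cayley graph of `G` spanned by the path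
starting at `1` labelled by the word `w`. -/
def Gamma (ιG : X → G) (w : Word X) : Set (G × Letter X) :=
  pathEdges ιG 1 (FreeMonoid.toList w)

/-- `w` labels a simple path starting at `1` in the Cayley graph of `G`: the values of
distinct prefixes of `w` are distinct vertices. -/
def IsSimplePathWordG (ιG : X → G) (w : Word X) : Prop :=
  ∀ j k : ℕ, j ≤ (FreeMonoid.toList w).length → k ≤ (FreeMonoid.toList w).length →
    evalWord ιG (wordPrefix w j) = evalWord ιG (wordPrefix w k) → j = k

/-- `w` labels a simple cycle (based at `1`) in the Cayley graph of `G`: `w` is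
non-empty, `w = 1` holds in `G`, and the initial vertices of the edges of the cycle
(i.e. the values of the proper prefixes of `w`) are pairwise distinct. -/
def IsSimpleCycleWordG (ιG : X → G) (w : Word X) : Prop :=
  w ≠ 1 ∧ evalWord ιG w = 1 ∧
    ∀ j k : ℕ, j < (FreeMonoid.toList w).length → k < (FreeMonoid.toList w).length →
      evalWord ιG (wordPrefix w j) = evalWord ιG (wordPrefix w k) → j = k

/-- The defining relation of the Margolis-Meakin expansion `M(G,X)` as a quotient of
X̄*: two words are identified iff they span the same subgraph of the Cayley graph and
represent the same element of `G`. -/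
def mmRel (ιG : X → G) : Word X → Word X → Prop := fun u v =>
  Gamma ιG u = Gamma ιG v ∧ evalWord ιG u = evalWord ιG v

/-- The generating pairs of the congruence ξ_G: two words labelling simple paths from
`1` to the same element of `G` are identified. -/
def spRel (ιG : X → G) : Word X → Word X → Prop := fun u v =>
  IsSimplePathWordG ιG u ∧ IsSimplePathWordG ιG v ∧ evalWord ιG u = evalWord ιG v

/-- The defining relations of `M_sF(G,X) = M(G,X)/ξ_G` as a quotient of X̄*. -/
def msfRel (ιG : X → G) : Word X → Word X → Prop := fun u v =>
  mmRel ιG u v ∨ spRel ιG u v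

/-- `M_sF(G,X)`: the quotient of the Margolis-Meakin expansion `M(G,X)` by the
congruence ξ_G identifying, for each `g ∈ G`, all graphs spanned by simple paths
from `1` to `g`. -/
abbrev MsF (ιG : X → G) := InvPres (msfRel ιG)

end Graph

/-! ### Reduced words, cyclic words, linked words, invertible pieces -/

/-- A word over X̄ is reduced if it has no factor of the form `x x⁻¹` or `x⁻¹ x`. -/
def ReducedWord (w : Word X) : Prop :=
  ∀ a : Letter X, ¬ ([a, invL a] <:+: FreeMonoid.toList w)

/-- A word over X̄ is cyclically reduced if it is reduced and its first and last
letters are not mutually inverse. -/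
def CyclicallyReducedWord (w : Word X) : Prop :=
  ReducedWord w ∧ ∀ a : Letter X, (FreeMonoid.toList w).head? = some a →
    (FreeMonoid.toList w).getLast? ≠ some (invL a)

/-- A cyclically reduced word is cyclic with respect to `(G,X)` if it labels a simple
cycle in the Cayley graph of `G`. -/
def IsCyclicWord {G : Type*} [Monoid G] [Inv G] (ιG : X → G) (w : Word X) : Prop :=
  CyclicallyReducedWord w ∧ IsSimpleCycleWordG ιG w

/-- `w'` is a cyclic conjugate of `w`. -/
def IsCyclicConjugate (w' w : Word X) : Prop := ∃ u v : Word X, w' = u * v ∧ v * u = w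

/-- A word is linked with respect to `(M, ι)` if for every pair of adjacent letters
`a, b` of the word, `a⁻¹ a = b b⁻¹` holds in `M` (the letters are "matching"). -/
def Linked {M : Type*} [Monoid M] [Inv M] (ι : X → M) (w : Word X) : Prop :=
  ∀ (p q : Word X) (a b : Letter X),
    w = p * (FreeMonoid.of a * (FreeMonoid.of b * q)) →
    (evalLetter ι a)⁻¹ * evalLetter ι a = evalLetter ι b * (evalLetter ι b)⁻¹

/-- `ws` is the factorisation of the word `w` into minimal invertible pieces with
respect to `(M, ι)`: `w` is the concatenation of the members of `ws`, each of which is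
a non-empty word representing an invertible element of `M` such that no proper
non-empty prefix or suffix represents an invertible element of `M`. -/
def IsPieceDecomp {M : Type*} [Monoid M] [Inv M] (ι : X → M) (w : Word X)
    (ws : List (Word X)) : Prop :=
  ws.prod = w ∧ ∀ z ∈ ws, z ≠ 1 ∧ IsUnit (evalWord ι z) ∧
    ∀ p s : Word X, z = p * s → p ≠ 1 → s ≠ 1 →
      ¬ IsUnit (evalWord ι p) ∧ ¬ IsUnit (evalWord ι s)


/-- The relations `w² = w` for all words `w` with `w = 1` in `G`
(these present the Margolis-Meakin expansion `M(G,X)`). -/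
def sqRel {G : Type*} [Monoid G] [Inv G] (ιG : X → G) : Word X → Word X → Prop :=
  fun a b => ∃ t : Word X, evalWord ιG t = 1 ∧ a = t * t ∧ b = t

/-- The relations `u = v⁻¹` for all pairs `(u,v) ∈ θ_G`, i.e. for all non-empty words
`u, v` such that `uv` is cyclic with respect to `(G,X)`. -/
def thetaRel {G : Type*} [Monoid G] [Inv G] (ιG : X → G) : Word X → Word X → Prop :=
  fun a b => ∃ u v : Word X, u ≠ 1 ∧ v ≠ 1 ∧ IsCyclicWord ιG (u * v) ∧ a = u ∧ b = wordInv v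

/-! ### Values of words and of their factors -/

section Paths

variable {G : Type*} [Group G] (ι : X → G)

/-- The value in `G` of a list of letters; `evalWord` of the corresponding word. -/
def lev (l : List (Letter X)) : G := (l.map (evalLetter ι)).prod

/-- The formal inverse of a list of letters; `wordInv` of the corresponding word. -/
def linv (l : List (Letter X)) : List (Letter X) := l.reverse.map invL

theorem linv_linv (l : List (Letter X)) : linv (linv l) = l :=
  wordInv_wordInv (FreeMonoid.ofList l)

theorem linv_append (l m : List (Letter X)) : linv (l ++ m) = linv m ++ linv l := by
  simp [linv]

theorem linv_length (l : List (Letter X)) : (linv l).length = l.length := by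
  simp [linv]

theorem linv_eq_nil {l : List (Letter X)} : linv l = [] ↔ l = [] := by
  simp [linv]

theorem lev_nil : lev ι [] = 1 := rfl

theorem lev_append (l m : List (Letter X)) : lev ι (l ++ m) = lev ι l * lev ι m := by
  simp [lev]

theorem evalLetter_invL (a : Letter X) : evalLetter ι (invL a) = (evalLetter ι a)⁻¹ := by
  rcases a with ⟨x, _ | _⟩ <;> simp [evalLetter, invL]

theorem lev_linv (l : List (Letter X)) : lev ι (linv l) = (lev ι l)⁻¹ := by
  induction l with
  | nil => simp [lev, linv]
  | cons a l ih =>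
    have h : linv (a :: l) = linv l ++ [invL a] := by simp [linv]
    rw [h, lev_append, ih]
    simp [lev, evalLetter_invL]

/-- No non-empty factor of `l` evaluates to `1`.  Since distinct prefixes of `l` have equal value
exactly when the factor between them has value `1`, this says that `l` labels a simple path. -/
def NoClosed (l : List (Letter X)) : Prop :=
  ∀ x m y, l = x ++ m ++ y → lev ι m = 1 → m = []

variable {ι}

theorem noClosed_linv {l : List (Letter X)} (h : NoClosed ι l) : NoClosed ι (linv l) := by
  intro x m y e hm
  have e' : l = linv y ++ linv m ++ linv x := by
    rw [← linv_linv l, e]; simp [linv_append]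
  exact linv_eq_nil.1 (h _ _ _ e' (by rw [lev_linv, hm, inv_one]))

theorem noClosed_left {l m : List (Letter X)} (h : NoClosed ι (l ++ m)) : NoClosed ι l := by
  rintro x k y rfl hk
  exact h x k (y ++ m) (by simp) hk

theorem noClosed_right {l m : List (Letter X)} (h : NoClosed ι (l ++ m)) : NoClosed ι m := by
  rintro x k y rfl hk
  exact h (l ++ x) k y (by simp) hk

theorem take_split (l : List (Letter X)) {j k : ℕ} (h : j ≤ k) :
    l = l.take j ++ (l.take k).drop j ++ l.drop k ∧
      l.take k = l.take j ++ (l.take k).drop j := by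
  have h1 : l.take k = l.take j ++ (l.take k).drop j := by
    conv_lhs => rw [← List.take_append_drop j (l.take k)]
    rw [List.take_take, min_eq_left h]
  refine ⟨?_, h1⟩
  rw [← h1, List.take_append_drop]

theorem isSimplePathWordG_iff {w : Word X} :
    IsSimplePathWordG ι w ↔ NoClosed ι (FreeMonoid.toList w) := by
  constructor
  · intro h x m y e hm
    have e1 : (FreeMonoid.toList w).take x.length = x := by rw [e]; simp
    have e2 : (FreeMonoid.toList w).take (x ++ m).length = x ++ m := by
      rw [e]; exact List.take_left
    have hlen : (FreeMonoid.toList w).length = x.length + m.length + y.length := by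
      rw [e]; simp [add_assoc]
    have := h x.length (x ++ m).length (by omega) (by simp; omega) (by
      change lev ι ((FreeMonoid.toList w).take _) = lev ι ((FreeMonoid.toList w).take _)
      rw [e1, e2, lev_append, hm, mul_one])
    simp only [List.length_append] at this
    exact List.length_eq_zero_iff.1 (by omega)
  · intro h
    have key : ∀ j k : ℕ, j ≤ k → k ≤ (FreeMonoid.toList w).length →
        evalWord ι (wordPrefix w j) = evalWord ι (wordPrefix w k) → j = k := by
      intro j k hjk hk e
      obtain ⟨s1, s2⟩ := take_split (FreeMonoid.toList w) hjk
      change lev ι ((FreeMonoid.toList w).take j) = lev ι ((FreeMonoid.toList w).take k) at e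
      rw [s2, lev_append] at e
      have := congrArg List.length (h _ _ _ s1 (left_eq_mul.1 e))
      simp at this
      omega
    intro j k hj hk e
    rcases le_total j k with hjk | hjk
    · exact key j k hjk hk e
    · exact (key k j hjk hj e.symm).symm

/-- A non-empty closed word labels a simple cycle iff its only closed factors are the empty one and
the whole word. -/
theorem isSimpleCycleWordG_iff {w : Word X} :
    IsSimpleCycleWordG ι w ↔ FreeMonoid.toList w ≠ [] ∧ lev ι (FreeMonoid.toList w) = 1 ∧
      ∀ x m y, FreeMonoid.toList w = x ++ m ++ y → lev ι m = 1 →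
        m = [] ∨ x = [] ∧ y = [] := by
  refine and_congr Iff.rfl (and_congr_right fun h1 => ?_)
  change lev ι (FreeMonoid.toList w) = 1 at h1
  constructor
  · intro h x m y e hm
    have e1 : (FreeMonoid.toList w).take x.length = x := by rw [e]; simp
    have e2 : (FreeMonoid.toList w).take (x ++ m).length = x ++ m := by
      rw [e]; exact List.take_left
    have hlen : (FreeMonoid.toList w).length = x.length + m.length + y.length := by
      rw [e]; simp [add_assoc]
    by_cases hm0 : m = []
    · exact Or.inl hm0
    right
    have hmpos := List.length_pos_iff.2 hm0
    have hxm : lev ι x = lev ι (x ++ m) := by rw [lev_append, hm, mul_one]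
    by_cases hy : y = []
    · -- the final vertex is the initial one, so position `|x|` has to be compared with `0`
      refine ⟨?_, hy⟩
      subst hy
      have := h 0 x.length (by omega) (by omega) (by
        change lev ι ((FreeMonoid.toList w).take _) = lev ι ((FreeMonoid.toList w).take _)
        rw [e1, hxm]
        rw [e, List.append_nil] at h1
        rw [h1]; simp [lev])
      exact List.length_eq_zero_iff.1 this.symm
    · exfalso
      have hypos := List.length_pos_iff.2 hy
      have := h x.length (x ++ m).length (by omega) (by simp; omega) (by
        change lev ι ((FreeMonoid.toList w).take _) = lev ι ((FreeMonoid.toList w).take _)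
        rw [e1, e2, hxm])
      simp only [List.length_append] at this
      omega
  · intro h
    have key : ∀ j k : ℕ, j ≤ k → k < (FreeMonoid.toList w).length →
        evalWord ι (wordPrefix w j) = evalWord ι (wordPrefix w k) → j = k := by
      intro j k hjk hk e
      obtain ⟨s1, s2⟩ := take_split (FreeMonoid.toList w) hjk
      change lev ι ((FreeMonoid.toList w).take j) = lev ι ((FreeMonoid.toList w).take k) at e
      rw [s2, lev_append] at e
      rcases h _ _ _ s1 (left_eq_mul.1 e) with h' | ⟨-, h'⟩
      · have := congrArg List.length h'
        simp at this
        omega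
      · have := congrArg List.length h'
        simp at this
        omega
    intro j k hj hk e
    rcases le_total j k with hjk | hjk
    · exact key j k hjk hk e
    · exact (key k j hjk hj e.symm).symm

/-! ### Coterminal simple paths and cyclic words -/

theorem spRel_of_thetaRel {a b : Word X} (h : thetaRel ι a b) : spRel ι a b := by
  obtain ⟨u, v, hu, hv, ⟨-, hc⟩, ha, hb⟩ := h
  subst ha hb
  obtain ⟨-, h1, hcl⟩ := isSimpleCycleWordG_iff.1 hc
  rw [FreeMonoid.toList_mul] at h1 hcl
  refine ⟨isSimplePathWordG_iff.2 ?_, isSimplePathWordG_iff.2 (noClosed_linv ?_), ?_⟩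
  · intro x m y e hm
    rcases hcl x m (y ++ FreeMonoid.toList v) (by rw [e]; simp) hm with h | ⟨-, h⟩
    · exact h
    · exact absurd (List.append_eq_nil_iff.1 h).2 hv
  · intro x m y e hm
    rcases hcl (FreeMonoid.toList a ++ x) m y (by rw [e]; simp) hm with h | ⟨h, -⟩
    · exact h
    · exact absurd (List.append_eq_nil_iff.1 h).1 hu
  · change lev ι (FreeMonoid.toList a) = lev ι (linv (FreeMonoid.toList v))
    rw [lev_linv]
    rw [lev_append] at h1
    exact eq_inv_of_mul_eq_one_left h1

/-- Two simple paths with distinct first edges, which first meet again at their endpoint,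
form a cyclic word.  The hypothesis `hmin` says that no non-empty proper prefix of `q` ends
on `p`. -/
theorem thetaRel_of_first_meeting {p q : List (Letter X)} (hp : NoClosed ι p)
    (hq : NoClosed ι q) (hp0 : p ≠ []) (hq0 : q ≠ []) (hpq : lev ι p = lev ι q)
    (hhead : p.head? ≠ q.head?)
    (hmin : ∀ x x' y y', q = y ++ y' → y ≠ [] → p = x ++ x' → lev ι y = lev ι x → y' = []) :
    thetaRel ι (FreeMonoid.ofList p) (FreeMonoid.ofList q) := by
  have hclosed : ∀ x m y, p ++ linv q = x ++ m ++ y → lev ι m = 1 →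
      m = [] ∨ x = [] ∧ y = [] := by
    -- a closed factor lies in `p`, or lies in `q⁻¹`, or straddles the junction as `m₁ m₂`
    have straddle : ∀ x m₁ m₂ y, p = x ++ m₁ → linv q = m₂ ++ y → lev ι (m₁ ++ m₂) = 1 →
        m₁ ++ m₂ = [] ∨ x = [] ∧ y = [] := by
      intro x m₁ m₂ y e₁ e₂ hm
      have eq : q = linv y ++ linv m₂ := by rw [← linv_append, ← e₂, linv_linv]
      have hxy : lev ι (linv y) = lev ι x := by
        rw [e₁, eq, lev_append, lev_append, lev_linv ι m₂] at hpq
        rw [lev_append] at hm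
        rw [eq_inv_of_mul_eq_one_left hm] at hpq
        exact (mul_right_cancel hpq).symm
      by_cases hy : y = []
      · subst hy
        exact Or.inr ⟨hp [] x m₁ (by simpa using e₁) (by rw [← hxy]; simp [linv, lev]), rfl⟩
      · left
        have h2 : m₂ = [] :=
          linv_eq_nil.1 (hmin x m₁ (linv y) _ eq (fun h => hy (linv_eq_nil.1 h)) e₁ hxy)
        subst h2
        simp only [List.append_nil] at hm ⊢
        exact hp x m₁ [] (by simpa using e₁) hm
    intro x m y e hm
    rw [List.append_assoc] at e
    rcases List.append_eq_append_iff.1 e with ⟨c, hc1, hc2⟩ | ⟨c, hc1, hc2⟩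
    · exact Or.inl (noClosed_linv hq c m y (by simpa using hc2) hm)
    · rcases List.append_eq_append_iff.1 hc2 with ⟨d, hd1, hd2⟩ | ⟨d, hd1, hd2⟩
      · exact Or.inl (hp x m d (by rw [hc1, hd1]; simp) hm)
      · subst hd1
        exact straddle x c d y hc1 hd2 hm
  have hlast : ∀ a, p.head? = some a → (p ++ linv q).getLast? ≠ some (invL a) := by
    intro a ha hl
    apply hhead
    rw [ha]
    obtain ⟨b, q', rfl⟩ := List.exists_cons_of_ne_nil hq0
    simp only [linv, List.reverse_cons, List.map_append, List.map_cons, List.map_nil,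
      ← List.append_assoc, List.getLast?_append, List.getLast?_singleton, Option.some_or,
      Option.some.injEq] at hl
    rw [← invL_invL a, ← hl, invL_invL]; rfl
  refine ⟨FreeMonoid.ofList p, wordInv (FreeMonoid.ofList q), hp0,
    fun h => hq0 (linv_eq_nil.1 h), ⟨⟨?_, ?_⟩, ?_⟩, rfl, (wordInv_wordInv _).symm⟩
  · -- a factor `a a⁻¹` is closed, so it is the whole word, against the distinct first letters
    rintro a ⟨x, y, e⟩
    have e' : p ++ linv q = x ++ [a, invL a] ++ y := e.symm
    rcases hclosed x _ y e' (by simp [lev, evalLetter_invL]) with h | ⟨rfl, rfl⟩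
    · simp at h
    · refine hlast a ?_ (by rw [e']; simp)
      obtain ⟨b, p', rfl⟩ := List.exists_cons_of_ne_nil hp0
      simp at e'
      simp [e'.1]
  · intro a ha
    refine hlast a ?_
    change (p ++ linv q).head? = some a at ha
    obtain ⟨b, p', rfl⟩ := List.exists_cons_of_ne_nil hp0
    simpa using ha
  · refine isSimpleCycleWordG_iff.2 ⟨fun h => hp0 (List.append_eq_nil_iff.1 h).1, ?_, hclosed⟩
    change lev ι (p ++ linv q) = 1
    rw [lev_append, lev_linv, hpq, mul_inv_cancel]

/-- Coterminal simple paths are identified by every congruence containing `θ_G`. -/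
theorem con_of_coterminal (c : Con (Word X)) (hc : ∀ u v, thetaRel ι u v → c u v) (n : ℕ) :
    ∀ p q : List (Letter X), p.length + q.length = n → NoClosed ι p → NoClosed ι q →
      lev ι p = lev ι q → c (FreeMonoid.ofList p) (FreeMonoid.ofList q) := by
  classical
  induction n using Nat.strong_induction_on with
  | _ n ih =>
  intro p q hn hp hq hpq
  by_cases hp0 : p = []
  · subst hp0
    rw [hq [] q [] (by simp) (by rw [← hpq, lev_nil])]
    exact c.refl _
  by_cases hq0 : q = []
  · subst hq0
    rw [hp [] p [] (by simp) (by rw [hpq, lev_nil])]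
    exact c.refl _
  by_cases hhead : p.head? = q.head?
  · obtain ⟨a, p', rfl⟩ := List.exists_cons_of_ne_nil hp0
    obtain ⟨b, q', rfl⟩ := List.exists_cons_of_ne_nil hq0
    obtain rfl : a = b := by simpa using hhead
    have := ih (p'.length + q'.length) (by simp at hn; omega) p' q' rfl
      (noClosed_right (l := [a]) hp) (noClosed_right (l := [a]) hq)
      (by simpa [lev] using hpq)
    exact c.mul (c.refl (FreeMonoid.of a)) this
  -- `q₁` is the shortest non-empty prefix of `q` ending on `p`
  have hex : ∃ k, ∃ p₁ p₂ q₁ q₂, q = q₁ ++ q₂ ∧ q₁ ≠ [] ∧ p = p₁ ++ p₂ ∧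
      lev ι q₁ = lev ι p₁ ∧ q₁.length = k :=
    ⟨_, p, [], q, [], by simp, hq0, by simp, hpq.symm, rfl⟩
  obtain ⟨p₁, p₂, q₁, q₂, eq, hq₁, ep, h₁, hk⟩ := Nat.find_spec hex
  have hp₁ : p₁ ≠ [] := by
    rintro rfl
    exact hq₁ (hq [] q₁ q₂ (by simpa using eq) h₁)
  subst eq ep
  have hθ : thetaRel ι (FreeMonoid.ofList p₁) (FreeMonoid.ofList q₁) := by
    refine thetaRel_of_first_meeting (noClosed_left hp) (noClosed_left hq) hp₁ hq₁ h₁.symm ?_ ?_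
    · obtain ⟨a, p', rfl⟩ := List.exists_cons_of_ne_nil hp₁
      obtain ⟨b, q', rfl⟩ := List.exists_cons_of_ne_nil hq₁
      simpa using hhead
    · intro x x' y y' e hy e' hxy
      have := Nat.find_min' hex ⟨x, x' ++ p₂, y, y' ++ q₂, by rw [e]; simp, hy,
        by rw [e']; simp, hxy, rfl⟩
      rw [← hk, e, List.length_append] at this
      exact List.length_eq_zero_iff.1 (by omega)
  have h₂ : lev ι p₂ = lev ι q₂ := by
    rw [lev_append, lev_append, h₁] at hpq
    exact mul_left_cancel hpq
  have hl := List.length_pos_iff.2 hq₁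
  simp only [List.length_append] at hn
  exact c.mul (hc _ _ hθ) (ih (p₂.length + q₂.length) (by omega) p₂ q₂ rfl
    (noClosed_right hp) (noClosed_right hq) h₂)

end Paths

/-! ### Idempotents of inverse monoids -/

section Inverse

variable {M : Type*} [InverseMonoid M]

theorem inv_of_idem {e : M} (h : e * e = e) : e⁻¹ = e := by
  have hi : e⁻¹ * e⁻¹ = e⁻¹ := by rw [← InverseMonoid.mul_inv_rev, h]
  have h3 : e⁻¹ * e * e⁻¹ = e⁻¹ := by
    simpa [InverseMonoid.inv_inv] using InverseMonoid.mul_inv_mul e⁻¹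
  have hcomm : e * e⁻¹ * (e⁻¹ * e) = e⁻¹ * e * (e * e⁻¹) := by
    simpa [InverseMonoid.inv_inv] using InverseMonoid.idem_mul_comm e e⁻¹
  symm
  calc e = e * e⁻¹ * e := (InverseMonoid.mul_inv_mul e).symm
    _ = e * e⁻¹ * (e⁻¹ * e) := by
        rw [← mul_assoc, mul_assoc e e⁻¹ e⁻¹, hi]
    _ = e⁻¹ * e * (e * e⁻¹) := hcomm
    _ = e⁻¹ * e * e⁻¹ := by rw [← mul_assoc, mul_assoc e⁻¹ e e, h]
    _ = e⁻¹ := h3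

/-- The projection `aa⁻¹`. -/
def rng (a : M) : M := a * a⁻¹

theorem rng_comm (a b : M) : rng a * rng b = rng b * rng a := InverseMonoid.idem_mul_comm a b

theorem rng_mul_self (a : M) : rng a * a = a := InverseMonoid.mul_inv_mul a

theorem rng_idem (a : M) : rng a * rng a = rng a := by
  conv_lhs => rw [rng, ← mul_assoc]
  rw [InverseMonoid.mul_inv_mul]; rfl

theorem rng_mul (a b : M) : rng (a * b) = a * rng b * a⁻¹ := by
  simp only [rng, InverseMonoid.mul_inv_rev, mul_assoc]

theorem rng_mul_absorb (a b : M) : rng a * rng (a * b) = rng (a * b) := by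
  rw [rng_mul, ← mul_assoc, ← mul_assoc, rng_mul_self]

/-- If `w⁻¹v` is idempotent, then the projection of `wb` lies above the product of the
projections of `w` and of `vb`. -/
theorem rng_transport {w v : M} (b : M) (h : w⁻¹ * v * (w⁻¹ * v) = w⁻¹ * v) :
    rng w * rng (v * b) * rng (w * b) = rng w * rng (v * b) := by
  have hself : v⁻¹ * w = w⁻¹ * v := by
    have := inv_of_idem h
    rwa [InverseMonoid.mul_inv_rev, InverseMonoid.inv_inv] at this
  have hf : rng (w⁻¹ * v) = w⁻¹ * v := by
    rw [rng, inv_of_idem h, h]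
  calc rng w * rng (v * b) * rng (w * b)
      = w * (w⁻¹ * v) * rng b * (v⁻¹ * w) * rng b * w⁻¹ := by
        rw [rng_mul, rng_mul]; simp only [rng, mul_assoc]
    _ = w * (w⁻¹ * v) * rng b * (v⁻¹ * w) * w⁻¹ := by
        rw [hself]
        have hc : rng b * (w⁻¹ * v) = w⁻¹ * v * rng b := by
          rw [← hf]; exact rng_comm _ _
        rw [mul_assoc _ (rng b) (w⁻¹ * v), hc, mul_assoc w (w⁻¹ * v) (w⁻¹ * v * rng b),
          ← mul_assoc (w⁻¹ * v) (w⁻¹ * v) (rng b), h]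
        simp only [mul_assoc]
        rw [← mul_assoc (rng b) (rng b), rng_idem]
    _ = rng w * rng (v * b) * rng w := by
        rw [rng_mul]; simp only [rng, mul_assoc]
    _ = rng w * rng (v * b) := by
        rw [mul_assoc, rng_comm (v * b) w, ← mul_assoc, rng_idem]

end Inverse

/-! ### The Margolis-Meakin relations -/

section MM

theorem presCon_le_of_rel {r r' : Word X → Word X → Prop}
    (h : ∀ u v, r u v → presCon r' u v) : presCon r ≤ presCon r' := by
  have hw : ∀ u v : Word X, wagnerRel u v → presCon r' u v :=
    fun u v h => ConGen.Rel.of _ _ (Or.inl (Or.inl h))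
  refine Con.conGen_le.2 fun u v huv => ?_
  have hinv : presCon r' (wordInv u) (wordInv v) → presCon r' u v := fun h' => by
    simpa [wordInv_wordInv] using presCon_inv h'
  rcases huv with (h' | h') | (h' | h')
  · exact hw _ _ h'
  · exact h _ _ h'
  · exact hinv (hw _ _ h')
  · exact hinv (h _ _ h')

theorem presCon_of_rel {r : Word X → Word X → Prop} {u v : Word X} (h : r u v) :
    presCon r u v := ConGen.Rel.of _ _ (Or.inl (Or.inr h))

theorem mkW_eq {r : Word X → Word X → Prop} {u v : Word X} :
    mkW r u = mkW r v ↔ presCon r u v := Quotient.eq''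

theorem mkW_mul (r : Word X → Word X → Prop) (u v : Word X) :
    mkW r (u * v) = mkW r u * mkW r v := rfl

theorem mkW_inv (r : Word X → Word X → Prop) (u : Word X) :
    mkW r (wordInv u) = (mkW r u)⁻¹ := rfl

variable {G : Type*} [Group G] {ι : X → G}

theorem pathEdges_append (g : G) (l m : List (Letter X)) :
    pathEdges ι g (l ++ m) = pathEdges ι g l ∪ pathEdges ι (g * lev ι l) m := by
  induction l generalizing g with
  | nil => simp [pathEdges, lev]
  | cons a l ih =>
    have : g * evalLetter ι a * lev ι l = g * lev ι (a :: l) := by simp [lev, mul_assoc]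
    simp only [List.cons_append, pathEdges, ih, this, Set.insert_union]

theorem Gamma_mul (u v : Word X) :
    Gamma ι (u * v) = Gamma ι u ∪ pathEdges ι (evalWord ι u) (FreeMonoid.toList v) := by
  rw [Gamma, FreeMonoid.toList_mul, pathEdges_append, one_mul]; rfl

theorem mmRel_of_sqRel {u v : Word X} (h : sqRel ι u v) : mmRel ι u v := by
  obtain ⟨t, ht, hu, hv⟩ := h
  subst hu hv
  refine ⟨?_, ?_⟩
  · rw [Gamma_mul, ht]; exact Set.union_self _
  · change lev ι (FreeMonoid.toList v ++ FreeMonoid.toList v) = _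
    rw [lev_append]
    change evalWord ι v * evalWord ι v = evalWord ι v
    rw [ht, one_mul]

/-- Every edge of the path labelled `l` from the end of `s` starts at the end of some word `t`
such that the projection of `t` followed by that edge lies above the projection of `sl`.  For an
edge traversed backwards, `t` ends with the traversal of the inverse edge. -/
theorem exists_of_mem_pathEdges (r : Word X → Word X → Prop) (a : Letter X) (g : G)
    (l : List (Letter X)) : ∀ s : Word X, (g, a) ∈ pathEdges ι (evalWord ι s) l →
      ∃ t : Word X, evalWord ι t = g ∧
        rng (mkW r (s * FreeMonoid.ofList l)) * rng (mkW r (t * FreeMonoid.of a)) =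
          rng (mkW r (s * FreeMonoid.ofList l)) := by
  induction l with
  | nil => intro s h; exact absurd h (by simp [pathEdges])
  | cons b l ih =>
    intro s h
    have hsb : evalWord ι (s * FreeMonoid.of b) = evalWord ι s * evalLetter ι b := by
      change lev ι (FreeMonoid.toList s ++ [b]) = lev ι (FreeMonoid.toList s) * _
      rw [lev_append]; simp [lev]
    have hsplit : s * FreeMonoid.ofList (b :: l) = s * FreeMonoid.of b * FreeMonoid.ofList l := by
      rw [mul_assoc]; rfl
    have hle : rng (mkW r (s * FreeMonoid.ofList (b :: l))) * rng (mkW r (s * FreeMonoid.of b)) =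
        rng (mkW r (s * FreeMonoid.ofList (b :: l))) := by
      rw [hsplit, mkW_mul r (s * FreeMonoid.of b), rng_comm, rng_mul_absorb]
    rcases h with h | h | h
    · obtain ⟨rfl, rfl⟩ := Prod.mk.inj h
      exact ⟨s, rfl, hle⟩
    · obtain ⟨rfl, rfl⟩ := Prod.mk.inj h
      refine ⟨s * FreeMonoid.of b, hsb, ?_⟩
      -- `s b b⁻¹` and `s b` have the same projection
      have : rng (mkW r (s * FreeMonoid.of b * FreeMonoid.of (invL b))) =
          rng (mkW r (s * FreeMonoid.of b)) := by
        have hb : mkW r (FreeMonoid.of (invL b)) = (mkW r (FreeMonoid.of b))⁻¹ := rfl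
        rw [mul_assoc, mkW_mul, mkW_mul, mkW_mul, hb, rng_mul, rng_mul (mkW r s)]
        change _ * rng (rng (mkW r (FreeMonoid.of b))) * _ = _
        have : rng (rng (mkW r (FreeMonoid.of b))) = rng (mkW r (FreeMonoid.of b)) := by
          conv_lhs => rw [rng, inv_of_idem (rng_idem _), rng_idem]
        rw [this]
      rw [this, hle]
    · rw [← hsb] at h
      obtain ⟨t, ht, h'⟩ := ih _ h
      exact ⟨t, ht, by rw [hsplit, h']⟩

/-- If words equal to `1` in `G` are idempotent in `Inv⟨X ∣ r⟩`, then `uu⁻¹ ≤ ww⁻¹` there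
whenever `Γ_w ⊆ Γ_u`. -/
theorem le_of_Gamma_subset {r : Word X → Word X → Prop}
    (hr : ∀ t : Word X, evalWord ι t = 1 → mkW r t * mkW r t = mkW r t) (u : Word X)
    (l : List (Letter X)) (h : Gamma ι (FreeMonoid.ofList l) ⊆ Gamma ι u) :
    rng (mkW r u) * rng (mkW r (FreeMonoid.ofList l)) = rng (mkW r u) := by
  induction l using List.reverseRecOn with
  | nil =>
    have h1 : mkW r (FreeMonoid.ofList ([] : List (Letter X))) = 1 := rfl
    have h2 : (1 : InvPres r)⁻¹ = 1 := rfl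
    rw [h1]
    conv_lhs => rw [rng, rng, h2]
    rw [mul_one, mul_one]; rfl
  | append_singleton l a ih =>
    have hla : FreeMonoid.ofList (l ++ [a]) = FreeMonoid.ofList l * FreeMonoid.of a := rfl
    rw [hla, Gamma_mul] at h
    have ihl := ih (Set.subset_union_left.trans h)
    have hmem : (evalWord ι (FreeMonoid.ofList l), a) ∈ pathEdges ι (evalWord ι (1 : Word X))
        (FreeMonoid.toList u) := h (Or.inr (Or.inl rfl))
    obtain ⟨t, ht, hle⟩ := exists_of_mem_pathEdges r a _ _ 1 hmem
    rw [one_mul, FreeMonoid.ofList_toList] at hle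
    have hid := hr (wordInv (FreeMonoid.ofList l) * t) (by
      change lev ι (linv l ++ FreeMonoid.toList t) = 1
      rw [lev_append, lev_linv]
      change _ * evalWord ι t = 1
      rw [ht]; exact inv_mul_cancel _)
    rw [mkW_mul, mkW_inv] at hid
    have := rng_transport (mkW r (FreeMonoid.of a)) hid
    rw [hla, mkW_mul]
    rw [mkW_mul] at hle
    have hprod : rng (mkW r u) * (rng (mkW r (FreeMonoid.ofList l)) *
        rng (mkW r t * mkW r (FreeMonoid.of a))) = rng (mkW r u) := by
      rw [← mul_assoc, ihl, hle]
    rw [← hprod, mul_assoc, this]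

theorem mkW_eq_of_mmRel {r : Word X → Word X → Prop}
    (hr : ∀ t : Word X, evalWord ι t = 1 → mkW r t * mkW r t = mkW r t) {u v : Word X}
    (h : mmRel ι u v) : mkW r u = mkW r v := by
  obtain ⟨hG, he⟩ := h
  have huv : rng (mkW r u) = rng (mkW r v) := by
    rw [← le_of_Gamma_subset hr u (FreeMonoid.toList v) hG.symm.subset, rng_comm]
    exact le_of_Gamma_subset hr v (FreeMonoid.toList u) hG.subset
  have hid := hr (wordInv v * u) (by
    change lev ι (linv (FreeMonoid.toList v) ++ FreeMonoid.toList u) = 1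
    rw [lev_append, lev_linv]
    change (evalWord ι v)⁻¹ * evalWord ι u = 1
    rw [he, inv_mul_cancel])
  rw [mkW_mul, mkW_inv] at hid
  have hself : (mkW r u)⁻¹ * mkW r v = (mkW r v)⁻¹ * mkW r u := by
    have := inv_of_idem hid
    rwa [InverseMonoid.mul_inv_rev, InverseMonoid.inv_inv] at this
  -- with `e = v⁻¹u = u⁻¹v` one has `u = ve` and `v = ue`
  have h1 : mkW r u = mkW r v * ((mkW r v)⁻¹ * mkW r u) := by
    rw [← mul_assoc]
    exact (rng_mul_self (mkW r u)).symm.trans (by rw [huv]; rfl)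
  have h2 : mkW r v = mkW r u * ((mkW r v)⁻¹ * mkW r u) := by
    rw [← hself, ← mul_assoc]
    exact (rng_mul_self (mkW r v)).symm.trans (by rw [← huv]; rfl)
  calc mkW r u = mkW r v * ((mkW r v)⁻¹ * mkW r u) := h1
    _ = mkW r v * ((mkW r v)⁻¹ * mkW r u * ((mkW r v)⁻¹ * mkW r u)) := by rw [hid]
    _ = mkW r u * ((mkW r v)⁻¹ * mkW r u) := by rw [← mul_assoc, ← h1]
    _ = mkW r v := h2.symm

end MM

/-- Let `G` be an `X`-generated group.  Then `ξ_G = θ_G^♯` (as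
congruences: the congruence of `M(G,X)` generated by identifying coterminal simple
paths coincides with the congruence generated by the pairs coming from `θ_G`), and
consequently `M_sF(G,X)` is presented, as an `X`-generated inverse monoid, by the
relations (i) `w² = w` for all words `w` with `w = 1` in `G`, and (ii) `u = v⁻¹` for
all `(u,v) ∈ θ_G`. -/
theorem statement_3 {X G : Type*} [Group G] (ιG : X → G) (hG : XGen ιG) :
    presCon (msfRel ιG) = presCon (fun u v => mmRel ιG u v ∨ thetaRel ιG u v) ∧
    presCon (msfRel ιG) = presCon (fun u v => sqRel ιG u v ∨ thetaRel ιG u v) := by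
  have h1 : presCon (msfRel ιG) = presCon (fun u v => mmRel ιG u v ∨ thetaRel ιG u v) := by
    refine le_antisymm (presCon_le_of_rel ?_) (presCon_le_of_rel ?_)
    · rintro u v (h | ⟨hu, hv, huv⟩)
      · exact presCon_of_rel (Or.inl h)
      · exact con_of_coterminal _ (fun _ _ h => presCon_of_rel (Or.inr h)) _
          (FreeMonoid.toList u) (FreeMonoid.toList v) rfl (isSimplePathWordG_iff.1 hu)
          (isSimplePathWordG_iff.1 hv) huv
    · rintro u v (h | h)
      · exact presCon_of_rel (Or.inl h)
      · exact presCon_of_rel (Or.inr (spRel_of_thetaRel h))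
  refine ⟨h1, h1.trans (le_antisymm (presCon_le_of_rel ?_) (presCon_le_of_rel ?_))⟩
  · rintro u v (h | h)
    · refine mkW_eq.1 (mkW_eq_of_mmRel (fun t ht => ?_) h)
      rw [← mkW_mul]
      exact mkW_eq.2 (presCon_of_rel (Or.inl ⟨t, ht, rfl, rfl⟩))
    · exact presCon_of_rel (Or.inr h)
  · rintro u v (h | h)
    · exact presCon_of_rel (Or.inl (mmRel_of_sqRel h))
    · exact presCon_of_rel (Or.inr h)

end SFI
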